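/- arXiv:2410.01919 — 7 statements merged into one kernel-verified Lean document; each statement's English description precedes it below -/
import Mathlib

section
/- Let A be a real m×n matrix such that AᵀA is positive definite, and let R be a real symmetric positive semidefinite n×n matrix. Then AᵀA + R is positive definite (hence invertible) and the spectral radius of R(AᵀA + R)⁻¹ is strictly less than 1, i.e., every complex eigenvalue of R(AᵀA + R)⁻¹ has modulus strictly less than 1. -/
open Matrix

/-!
A generalized eigenpair `R v = z (B + R) v` satisfies `r = z (b + r)`, where `b = v* B v > 0` and
`r = v* R v ≥ 0`, so `z = r / (b + r)` lies in `[0, 1)`. Every eigenvalue of `R (B + R)⁻¹` occurs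
in such a pair, with `v = (B + R)⁻¹ w` for an eigenvector `w`. For real matrices this is applied
to their complexifications, which inherit definiteness.
-/

theorem spectralRadius_lt_of_forall_lt_of_finite {𝕜 𝓐 : Type*} [NormedField 𝕜] [Ring 𝓐]
    [Algebra 𝕜 𝓐] {a : 𝓐} {r : NNReal} (hfin : (spectrum 𝕜 a).Finite) (hr : 0 < r)
    (h : ∀ z ∈ spectrum 𝕜 a, ‖z‖₊ < r) : spectralRadius 𝕜 a < r := by
  have hsup : spectralRadius 𝕜 a = hfin.toFinset.sup fun z ↦ (‖z‖₊ : ENNReal) := by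
    simp [spectralRadius, Finset.sup_eq_iSup]
  rw [hsup, Finset.sup_lt_iff (ENNReal.coe_pos.mpr hr)]
  exact fun z hz ↦ ENNReal.coe_lt_coe.mpr (h z (hfin.mem_toFinset.mp hz))

section Field

variable {ι K L : Type*} [Fintype ι] [DecidableEq ι] [Field K] [Field L]

theorem map_nonsing_inv (f : K →+* L) (S : Matrix ι ι K) : S⁻¹.map f = (S.map f)⁻¹ := by
  have hadj : S.adjugate.map f = (S.map f).adjugate := f.map_adjugate S
  have hdet : f S.det = (S.map f).det := f.map_det S
  rw [inv_def, inv_def, Matrix.map_smul' _ _ _ (map_mul f), hadj, Ring.inverse_eq_inv',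
    Ring.inverse_eq_inv', map_inv₀, hdet]

theorem exists_mulVec_eq_smul_mulVec_of_mem_spectrum_mul_inv {M S : Matrix ι ι K} {z : K}
    (hS : IsUnit S) (hz : z ∈ spectrum K (M * S⁻¹)) :
    ∃ v ≠ 0, M *ᵥ v = z • S *ᵥ v := by
  rw [← spectrum_toLin', ← Module.End.hasEigenvalue_iff_mem_spectrum] at hz
  obtain ⟨w, hw⟩ := hz.exists_hasEigenvector
  have hSw : S *ᵥ S⁻¹ *ᵥ w = w := by
    rw [mulVec_mulVec, mul_nonsing_inv S ((isUnit_iff_isUnit_det S).mp hS), one_mulVec]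
  refine ⟨S⁻¹ *ᵥ w, fun hv ↦ hw.2 ?_, ?_⟩
  · rw [← hSw, hv, mulVec_zero]
  · rw [hSw, mulVec_mulVec, ← toLin'_apply, hw.apply_eq_smul]

end Field

section RCLike

open scoped ComplexOrder

variable {ι 𝕜 : Type*} [RCLike 𝕜]

open scoped MatrixOrder in
theorem posSemidef_map [Finite ι] {S : Type*} [CommRing S] [PartialOrder S] [StarRing S]
    [StarOrderedRing S] {B : Matrix ι ι 𝕜} (hB : B.PosSemidef) (f : 𝕜 →+* S)
    (hf : Function.Semiconj f star star) : (B.map f).PosSemidef := by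
  classical
  cases nonempty_fintype ι
  obtain ⟨C, rfl⟩ := CStarAlgebra.nonneg_iff_eq_star_mul_self.mp hB.nonneg
  rw [star_eq_conjTranspose, Matrix.map_mul, conjTranspose_map f hf]
  exact posSemidef_conjTranspose_mul_self _

theorem posDef_map [Finite ι] {𝕜' : Type*} [RCLike 𝕜'] {B : Matrix ι ι 𝕜} (hB : B.PosDef)
    (f : 𝕜 →+* 𝕜') (hf : Function.Semiconj f star star) : (B.map f).PosDef := by
  classical
  cases nonempty_fintype ι
  exact (posSemidef_map hB.posSemidef f hf).posDef_iff_isUnit.mpr (hB.isUnit.map f.mapMatrix)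

variable [Fintype ι]

theorem mem_Ico_of_mulVec_eq_smul_add_mulVec {B R : Matrix ι ι 𝕜} {z : 𝕜} {v : ι → 𝕜}
    (hB : B.PosDef) (hR : R.PosSemidef) (hv : v ≠ 0) (h : R *ᵥ v = z • (B + R) *ᵥ v) :
    z ∈ Set.Ico 0 1 := by
  set b := star v ⬝ᵥ B *ᵥ v
  set r := star v ⬝ᵥ R *ᵥ v
  have hb : 0 < b := hB.dotProduct_mulVec_pos hv
  have hr : 0 ≤ r := hR.dotProduct_mulVec_nonneg v
  have hbr : 0 < b + r := add_pos_of_pos_of_nonneg hb hr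
  have hrz : r = z * (b + r) := by
    simpa only [add_mulVec, dotProduct_smul, dotProduct_add, smul_eq_mul] using
      congrArg (star v ⬝ᵥ ·) h
  have hz : z = r / (b + r) := eq_div_of_mul_eq hbr.ne' hrz.symm
  rw [hz]
  exact ⟨div_nonneg hr hbr.le, (div_lt_one₀ hbr).mpr (lt_add_of_pos_left r hb)⟩

variable [DecidableEq ι]

theorem spectrum_mul_inv_add_subset_Ico {B R : Matrix ι ι 𝕜} (hB : B.PosDef)
    (hR : R.PosSemidef) : spectrum 𝕜 (R * (B + R)⁻¹) ⊆ Set.Ico 0 1 := by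
  intro z hz
  obtain ⟨v, hv, h⟩ :=
    exists_mulVec_eq_smul_mulVec_of_mem_spectrum_mul_inv (hB.add_posSemidef hR).isUnit hz
  exact mem_Ico_of_mulVec_eq_smul_add_mulVec hB hR hv h

theorem stmt_3_general {B R : Matrix ι ι 𝕜} (hB : B.PosDef) (hR : R.PosSemidef) :
    (B + R).PosDef ∧
      spectralRadius 𝕜 (R * (B + R)⁻¹) < 1 ∧
      ∀ z ∈ spectrum 𝕜 (R * (B + R)⁻¹), ‖z‖ < 1 := by
  have hnorm : ∀ z ∈ spectrum 𝕜 (R * (B + R)⁻¹), ‖z‖ < 1 := by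
    intro z hz
    obtain ⟨hz0, hz1⟩ := spectrum_mul_inv_add_subset_Ico hB hR hz
    rw [← RCLike.norm_of_nonneg' hz0] at hz1
    exact_mod_cast hz1
  refine ⟨hB.add_posSemidef hR, ?_, hnorm⟩
  exact_mod_cast spectralRadius_lt_of_forall_lt_of_finite (finite_spectrum _) one_pos hnorm

end RCLike

/-- If `AᵀA` is positive definite and `R` is symmetric positive semidefinite, then
`AᵀA + R` is positive definite and the spectral radius of `R(AᵀA + R)⁻¹` is `< 1`,
i.e. every complex eigenvalue of `R(AᵀA + R)⁻¹` has modulus `< 1`. -/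
theorem stmt_3 {m n : ℕ} (A : Matrix (Fin m) (Fin n) ℝ) (R : Matrix (Fin n) (Fin n) ℝ)
    (hA : (Aᵀ * A).PosDef) (hR : R.PosSemidef) :
    (Aᵀ * A + R).PosDef ∧
      spectralRadius ℂ ((R * (Aᵀ * A + R)⁻¹).map Complex.ofReal) < 1 ∧
      ∀ z ∈ spectrum ℂ ((R * (Aᵀ * A + R)⁻¹).map Complex.ofReal), ‖z‖ < 1 := by
  have hstar : Function.Semiconj Complex.ofRealHom star star := fun x ↦ (Complex.conj_ofReal x).symm
  open scoped ComplexOrder in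
  have h := stmt_3_general (posDef_map hA Complex.ofRealHom hstar)
    (posSemidef_map hR Complex.ofRealHom hstar)
  rw [← Matrix.map_add _ (map_add _), ← map_nonsing_inv, ← Matrix.map_mul] at h
  exact ⟨hA.add_posSemidef hR, h.2⟩
end

section
/- Let AᵀA = P·diag(λ₁, …, λₙ)·P⁻¹ with P a real orthogonal n×n matrix and eigenvalues λ₁ ≥ λ₂ ≥ … ≥ λₙ > 0. Let s with 1 ≤ s ≤ n−1 and μ ∈ ℝ satisfy λ_{s+1} ≤ μ² ≤ λ_s, and define the regularization matrix R := P·diag(max{μ² − λ₁, 0}, …, max{μ² − λₙ, 0})·P⁻¹. Then: (i) AᵀA + R = P·diag(λ₁, …, λ_s, μ², …, μ²)·P⁻¹ (the eigenvalues λ_{s+1}, …, λₙ are all replaced by μ²); (ii) AᵀA + R is positive definite; and (iii) the spectral radius of R(AᵀA + R)⁻¹ is strictly less than 1. -/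
open Matrix

/-!
Conjugation by `P` turns every matrix in the statement into a diagonal one, so the three claims are
scalar facts about `λᵢ` and `c = μ²`: the sum `λᵢ + max (c - λᵢ) 0` is `max λᵢ c`, which is positive
because `λᵢ` is, and for the same reason it exceeds `max (c - λᵢ) 0`. The eigenvalues
`max (c - λᵢ) 0 / max λᵢ c` of `R (AᵀA + R)⁻¹` therefore lie in `[0, 1)`. As the `λᵢ` decrease and
cross `c` between `s` and `s + 1`, `max λᵢ c` is `λᵢ` up to the index `s` and `c` beyond it.
-/

section OrderedScalars

variable {α : Type*} [LinearOrder α]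

theorem max_eq_ite_of_antitone {ι : Type*} [LinearOrder ι] {f : ι → α} (hf : Antitone f)
    {s : ι} {c : α} (hs : c ≤ f s) (hlt : ∀ i, s < i → f i ≤ c) (i : ι) :
    max (f i) c = if i ≤ s then f i else c := by
  split_ifs with hi
  · exact max_eq_left (hs.trans (hf hi))
  · exact max_eq_right (hlt i (not_le.mp hi))

variable [AddCommGroup α] [IsOrderedAddMonoid α]

theorem add_max_sub_zero (a c : α) : a + max (c - a) 0 = max a c := by
  rw [← max_add_add_left, add_sub_cancel, add_zero, max_comm]

theorem max_sub_zero_lt_max {a : α} (ha : 0 < a) (c : α) : max (c - a) 0 < max a c :=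
  max_lt ((sub_lt_self c ha).trans_le (le_max_right a c)) (ha.trans_le (le_max_left a c))

end OrderedScalars

section ConjDiagonal

variable {ι : Type*} [Fintype ι] [DecidableEq ι]

theorem conj_diagonal_add {K : Type*} [CommRing K] (P : Matrix ι ι K) (d e : ι → K) :
    P * diagonal d * P⁻¹ + P * diagonal e * P⁻¹ = P * diagonal (d + e) * P⁻¹ := by
  rw [← add_mul, ← mul_add, diagonal_add]
  rfl

theorem conj_diagonal_mul_inv {K : Type*} [Field K] {P : Matrix ι ι K} (hP : IsUnit P)
    (d : ι → K) {e : ι → K} (he : ∀ i, e i ≠ 0) :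
    P * diagonal d * P⁻¹ * (P * diagonal e * P⁻¹)⁻¹ = P * diagonal (d / e) * P⁻¹ := by
  have hdet : IsUnit P.det := (isUnit_iff_isUnit_det P).mp hP
  have diagonal_inv : (diagonal e)⁻¹ = diagonal e⁻¹ :=
    inv_eq_left_inv <| by simp [diagonal_mul_diagonal, he]
  calc P * diagonal d * P⁻¹ * (P * diagonal e * P⁻¹)⁻¹
      = P * diagonal d * (P⁻¹ * P) * (diagonal e)⁻¹ * P⁻¹ := by
        simp only [Matrix.mul_inv_rev, nonsing_inv_nonsing_inv P hdet, Matrix.mul_assoc]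
    _ = P * (diagonal d * diagonal e⁻¹) * P⁻¹ := by
        rw [nonsing_inv_mul P hdet, Matrix.mul_one, diagonal_inv, Matrix.mul_assoc P]
    _ = P * diagonal (d / e) * P⁻¹ := by
        simp only [diagonal_mul_diagonal, div_eq_mul_inv, Pi.mul_def]

theorem map_conj_diagonal {K L : Type*} [CommRing K] [CommRing L] (f : K →+* L)
    {P : Matrix ι ι K} (hP : IsUnit P) (d : ι → K) :
    (P * diagonal d * P⁻¹).map f = P.map f * diagonal (f ∘ d) * (P.map f)⁻¹ := by
  have map_inv : P⁻¹.map f = (P.map f)⁻¹ := by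
    refine (inv_eq_left_inv ?_).symm
    rw [← Matrix.map_mul, nonsing_inv_mul P ((isUnit_iff_isUnit_det P).mp hP),
      Matrix.map_one f f.map_zero f.map_one]
  rw [Matrix.map_mul, Matrix.map_mul, map_inv, diagonal_map f.map_zero]
  rfl

theorem posDef_conj_diagonal {K : Type*} [CommRing K] [PartialOrder K] [StarRing K]
    [StarOrderedRing K] [NoZeroDivisors K] {P : Matrix ι ι K} (hP : P ∈ unitaryGroup ι K)
    {d : ι → K} (hd : ∀ i, 0 < d i) : (P * diagonal d * P⁻¹).PosDef := by
  have inv_eq_star : P⁻¹ = star P := inv_eq_left_inv (mem_unitaryGroup_iff'.mp hP)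
  have isUnit : IsUnit P := IsUnit.of_mul_eq_one _ (mem_unitaryGroup_iff.mp hP)
  rw [inv_eq_star, isUnit.posDef_star_right_conjugate_iff]
  exact PosDef.diagonal hd

theorem spectrum_conj_diagonal {K : Type*} [Field K] {P : Matrix ι ι K} (hP : IsUnit P)
    (d : ι → K) : spectrum K (P * diagonal d * P⁻¹) = Set.range d := by
  obtain ⟨U, rfl⟩ := hP
  rw [← coe_units_inv, spectrum.units_conjugate, spectrum_diagonal]

theorem spectralRadius_conj_diagonal {K : Type*} [NormedField K] {P : Matrix ι ι K}
    (hP : IsUnit P) (d : ι → K) :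
    spectralRadius K (P * diagonal d * P⁻¹) = ⨆ i, (‖d i‖₊ : ENNReal) := by
  rw [spectralRadius, spectrum_conj_diagonal hP, iSup_range]

theorem spectralRadius_map_conj_diagonal_mul_inv_lt_one {K : Type*} (L : Type*) [NormedField K]
    [NormedField L] [NormedAlgebra K L] {P : Matrix ι ι K} (hP : IsUnit P) {d e : ι → K}
    (hde : ∀ i, ‖d i‖ < ‖e i‖) :
    spectralRadius L
      ((P * diagonal d * P⁻¹ * (P * diagonal e * P⁻¹)⁻¹).map (algebraMap K L)) < 1 := by
  have he (i : ι) : 0 < ‖e i‖ := (norm_nonneg _).trans_lt (hde i)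
  have hPL : IsUnit (P.map (algebraMap K L)) := hP.map (algebraMap K L).mapMatrix
  rw [conj_diagonal_mul_inv hP d fun i ↦ norm_pos_iff.mp (he i), map_conj_diagonal _ hP,
    spectralRadius_conj_diagonal hPL, ← Finset.sup_univ_eq_iSup, Finset.sup_lt_iff zero_lt_one]
  intro i _
  rw [ENNReal.coe_lt_one_iff, ← NNReal.coe_lt_one, coe_nnnorm, Function.comp_apply,
    norm_algebraMap', Pi.div_apply, norm_div]
  exact (div_lt_one (he i)).mpr (hde i)

end ConjDiagonal

/-- Relaxation of the regularization matrix.  Let `AᵀA = P diag(λ) P⁻¹` with `P`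
orthogonal and `λ₁ ≥ ⋯ ≥ λₙ > 0`, let `s` (0-based index) and `μ` satisfy
`λ_{s+1} ≤ μ² ≤ λ_s`, and let `R := P diag(max{μ² − λᵢ, 0}) P⁻¹`.  Then
`AᵀA + R = P diag(λ₁, …, λ_s, μ², …, μ²) P⁻¹`, `AᵀA + R` is positive definite, and the
spectral radius of `R(AᵀA + R)⁻¹` is `< 1`. -/
theorem stmt_8 {m n : ℕ} (A : Matrix (Fin m) (Fin n) ℝ) (P : Matrix (Fin n) (Fin n) ℝ)
    (hP : Pᵀ * P = 1) (lam : Fin n → ℝ)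
    (hdec : ∀ i j : Fin n, i ≤ j → lam j ≤ lam i) (hpos : ∀ i, 0 < lam i)
    (hATA : Aᵀ * A = P * Matrix.diagonal lam * P⁻¹)
    (s : Fin n) (hs : (s : ℕ) + 1 < n) (μ : ℝ)
    (hlo : lam ⟨(s : ℕ) + 1, hs⟩ ≤ μ ^ 2) (hhi : μ ^ 2 ≤ lam s)
    (R : Matrix (Fin n) (Fin n) ℝ)
    (hR : R = P * Matrix.diagonal (fun i => max (μ ^ 2 - lam i) 0) * P⁻¹) :
    Aᵀ * A + R = P * Matrix.diagonal (fun i => if i ≤ s then lam i else μ ^ 2) * P⁻¹ ∧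
    (Aᵀ * A + R).PosDef ∧
    spectralRadius ℂ ((R * (Aᵀ * A + R)⁻¹).map Complex.ofReal) < 1 := by
  have hP_unitary : P ∈ unitaryGroup (Fin n) ℝ := mem_unitaryGroup_iff'.mpr hP
  have hP_unit : IsUnit P := IsUnit.of_mul_eq_one_right _ hP
  have hsum : Aᵀ * A + R = P * diagonal (fun i ↦ max (lam i) (μ ^ 2)) * P⁻¹ := by
    rw [hATA, hR, conj_diagonal_add]
    simp only [Pi.add_def, add_max_sub_zero]
  have hmax_pos (i : Fin n) : 0 < max (lam i) (μ ^ 2) := lt_max_of_lt_left (hpos i)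
  rw [hsum, hR]
  refine ⟨?_, posDef_conj_diagonal hP_unitary hmax_pos,
    spectralRadius_map_conj_diagonal_mul_inv_lt_one ℂ hP_unit fun i ↦ ?_⟩
  · have hanti : Antitone lam := fun i j ↦ hdec i j
    have hle (i : Fin n) (hi : s < i) : lam i ≤ μ ^ 2 :=
      (hdec _ i (Nat.succ_le_of_lt hi)).trans hlo
    simp only [max_eq_ite_of_antitone hanti hhi hle]
  · rw [Real.norm_of_nonneg (le_max_right _ _), Real.norm_of_nonneg (hmax_pos i).le]
    exact max_sub_zero_lt_max (hpos i) _
end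

section
/- Let AᵀA = P·diag(λ₁, …, λₙ)·P⁻¹ with P a real orthogonal n×n matrix and λ₁ ≥ … ≥ λₙ > 0, with λ₁ > λ_s for some 1 ≤ s ≤ n−1, and let R := P·diag(max{λ_s − λ₁, 0}, …, max{λ_s − λₙ, 0})·P⁻¹ (the relaxed regularization matrix with μ² = λ_s). Then the spectral condition number of AᵀA + R with respect to the spectral norm equals λ₁/λ_s, i.e., ‖AᵀA + R‖₂·‖(AᵀA + R)⁻¹‖₂ = λ₁/λ_s, which is at most the condition number λ₁/λₙ of AᵀA. -/
open Matrix

/-!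
Since `AᵀA` and `R` are diagonalized by the same orthogonal matrix, `AᵀA + R` has the eigenvalues
`λᵢ + max {λ_s - λᵢ, 0} = max {λ_s, λᵢ}`: regularization lifts every eigenvalue below `λ_s` to
`λ_s` and leaves the others alone. Unitary conjugation preserves the spectral norm, so the condition
number is the quotient of the extreme eigenvalues `λ₁` and `λ_s`.
-/

lemma pi_norm_eq_of_forall_norm_le {ι : Type*} [Fintype ι] {E : ι → Type*}
    [∀ i, SeminormedAddCommGroup (E i)] {x : ∀ i, E i} {i : ι} (h : ∀ j, ‖x j‖ ≤ ‖x i‖) :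
    ‖x‖ = ‖x i‖ :=
  le_antisymm ((pi_norm_le_iff_of_nonneg (norm_nonneg _)).mpr h) (norm_le_pi_norm x i)

section

variable {𝕜 ι : Type*} [RCLike 𝕜] [Fintype ι] [DecidableEq ι]

/-- The condition number `κ(M) = ‖M‖₂ ‖M⁻¹‖₂` with respect to the spectral norm; it is `0` for
singular `M`, whose `M⁻¹` is `0` by convention. -/
noncomputable def spectralCondNumber (M : Matrix ι ι 𝕜) : ℝ :=
  ‖toEuclideanCLM (𝕜 := 𝕜) M‖ * ‖toEuclideanCLM (𝕜 := 𝕜) M⁻¹‖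

/-- The relaxed regularization matrix of `U * diagonal lam * U⁻¹` with threshold `τ` (the `μ²` of
the paper), which raises each eigenvalue below `τ` to `τ`. -/
noncomputable def relaxedRegularization (U : Matrix ι ι 𝕜) (lam : ι → ℝ) (τ : ℝ) :
    Matrix ι ι 𝕜 :=
  U * diagonal (fun i => ((max (τ - lam i) 0 : ℝ) : 𝕜)) * U⁻¹

lemma conj_diagonal_add_relaxedRegularization (U : Matrix ι ι 𝕜) (lam : ι → ℝ) (τ : ℝ) :
    U * diagonal (fun i => (lam i : 𝕜)) * U⁻¹ + relaxedRegularization U lam τ =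
      U * diagonal (fun i => ((max τ (lam i) : ℝ) : 𝕜)) * U⁻¹ := by
  have lift_eigenvalue (i : ι) : lam i + max (τ - lam i) 0 = max τ (lam i) := by
    rw [← max_add_add_left, add_sub_cancel, add_zero]
  simp only [relaxedRegularization, ← add_mul, ← mul_add, diagonal_add, ← RCLike.ofReal_add,
    lift_eigenvalue]

lemma inv_conj_diagonal {K : Type*} [Field K] {U : Matrix ι ι K} (hU : IsUnit U.det) {d : ι → K}
    (hd : ∀ i, d i ≠ 0) : (U * diagonal d * U⁻¹)⁻¹ = U * diagonal d⁻¹ * U⁻¹ := by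
  have hdiag : (diagonal d)⁻¹ = diagonal d⁻¹ := by
    refine inv_eq_left_inv ?_
    rw [diagonal_mul_diagonal, ← diagonal_one]
    exact congrArg diagonal (funext fun i => inv_mul_cancel₀ (hd i))
  rw [Matrix.mul_inv_rev, Matrix.mul_inv_rev, hdiag, nonsing_inv_nonsing_inv U hU, mul_assoc]

open scoped Matrix.Norms.L2Operator in
lemma norm_toEuclideanCLM_conj_diagonal {U : Matrix ι ι 𝕜} (hU : U ∈ unitaryGroup ι 𝕜)
    (d : ι → 𝕜) : ‖toEuclideanCLM (𝕜 := 𝕜) (U * diagonal d * U⁻¹)‖ = ‖d‖ := by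
  rw [l2_opNorm_toEuclideanCLM, inv_eq_left_inv (mem_unitaryGroup_iff'.mp hU),
    CStarRing.norm_mul_mem_unitary _ (Unitary.star_mem hU), CStarRing.norm_mem_unitary_mul _ hU,
    l2_opNorm_diagonal]

lemma spectralCondNumber_conj_diagonal {U : Matrix ι ι 𝕜} (hU : U ∈ unitaryGroup ι 𝕜)
    {d : ι → 𝕜} {iMax iMin : ι} (hmax : ∀ i, ‖d i‖ ≤ ‖d iMax‖) (hmin : ∀ i, ‖d iMin‖ ≤ ‖d i‖)
    (hne : d iMin ≠ 0) :
    spectralCondNumber (U * diagonal d * U⁻¹) = ‖d iMax‖ / ‖d iMin‖ := by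
  have hdet : IsUnit U.det := isUnit_det_of_left_inverse (mem_unitaryGroup_iff'.mp hU)
  have hpos : 0 < ‖d iMin‖ := norm_pos_iff.mpr hne
  have hd (i : ι) : d i ≠ 0 := norm_pos_iff.mp (hpos.trans_le (hmin i))
  have norm_inv_le (i : ι) : ‖d⁻¹ i‖ ≤ ‖d⁻¹ iMin‖ := by
    simpa only [Pi.inv_apply, norm_inv] using inv_anti₀ hpos (hmin i)
  rw [spectralCondNumber, inv_conj_diagonal hdet hd,
    norm_toEuclideanCLM_conj_diagonal hU, norm_toEuclideanCLM_conj_diagonal hU,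
    pi_norm_eq_of_forall_norm_le hmax, pi_norm_eq_of_forall_norm_le norm_inv_le,
    Pi.inv_apply, norm_inv, div_eq_mul_inv]

theorem stmt_9_general {U : Matrix ι ι 𝕜} (hU : U ∈ unitaryGroup ι 𝕜) {lam : ι → ℝ} {τ : ℝ}
    {iMax k : ι} (hmax : ∀ i, lam i ≤ lam iMax) (hτ : 0 < τ) (hτmax : τ ≤ lam iMax)
    (hkτ : lam k ≤ τ) :
    spectralCondNumber
        (U * diagonal (fun i => (lam i : 𝕜)) * U⁻¹ + relaxedRegularization U lam τ) =
      lam iMax / τ ∧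
    (0 < lam k → lam iMax / τ ≤ lam iMax / lam k) := by
  have norm_eigenvalue (i : ι) : ‖((max τ (lam i) : ℝ) : 𝕜)‖ = max τ (lam i) :=
    RCLike.norm_of_nonneg (hτ.le.trans (le_max_left _ _))
  refine ⟨?_, fun hk => div_le_div_of_nonneg_left (hτ.le.trans hτmax) hk hkτ⟩
  rw [conj_diagonal_add_relaxedRegularization,
    spectralCondNumber_conj_diagonal hU (iMax := iMax) (iMin := k)]
  · rw [norm_eigenvalue, norm_eigenvalue, max_eq_right hτmax, max_eq_left hkτ]
  · intro i
    simpa only [norm_eigenvalue] using max_le_max_left τ (hmax i)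
  · intro i
    rw [norm_eigenvalue, norm_eigenvalue, max_eq_left hkτ]
    exact le_max_left τ (lam i)
  · simpa only [max_eq_left hkτ, RCLike.ofReal_ne_zero] using hτ.ne'

end

/-- Let `AᵀA = P diag(λ) P⁻¹` with `P` orthogonal, `λ₁ ≥ ⋯ ≥ λₙ > 0` and `λ₁ > λ_s`,
and let `R` be the relaxed regularization matrix with `μ² = λ_s`.  Then the spectral
condition number of `AᵀA + R` equals `λ₁/λ_s`, which is at most the condition number
`λ₁/λₙ` of `AᵀA`. -/
theorem stmt_9 {m n : ℕ} (A : Matrix (Fin m) (Fin n) ℝ) (P : Matrix (Fin n) (Fin n) ℝ)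
    (hP : Pᵀ * P = 1) (lam : Fin n → ℝ)
    (hdec : ∀ i j : Fin n, i ≤ j → lam j ≤ lam i) (hpos : ∀ i, 0 < lam i)
    (hATA : Aᵀ * A = P * Matrix.diagonal lam * P⁻¹)
    (s : Fin n) (hs : (s : ℕ) + 1 < n)
    (hgt : lam s < lam ⟨0, s.pos⟩)
    (R : Matrix (Fin n) (Fin n) ℝ)
    (hR : R = P * Matrix.diagonal (fun i => max (lam s - lam i) 0) * P⁻¹) :
    ‖Matrix.toEuclideanCLM (𝕜 := ℝ) (Aᵀ * A + R)‖ *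
        ‖Matrix.toEuclideanCLM (𝕜 := ℝ) ((Aᵀ * A + R)⁻¹)‖ = lam ⟨0, s.pos⟩ / lam s ∧
    lam ⟨0, s.pos⟩ / lam s ≤
        lam ⟨0, s.pos⟩ / lam ⟨n - 1, Nat.sub_lt s.pos Nat.one_pos⟩ := by
  have hmax (i : Fin n) : lam i ≤ lam ⟨0, s.pos⟩ := hdec _ _ (Nat.zero_le _)
  have hlast : lam ⟨n - 1, Nat.sub_lt s.pos Nat.one_pos⟩ ≤ lam s :=
    hdec _ _ (Nat.le_sub_one_of_lt s.isLt)
  have hP_orth : P ∈ orthogonalGroup (Fin n) ℝ := (mem_orthogonalGroup_iff' _ _).mpr hP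
  rw [hR, hATA]
  exact (stmt_9_general hP_orth hmax (hpos s) hgt.le hlast).imp_right fun h => h (hpos _)
end

section
/- Let λ₁ ≥ λ_{n−1} ≥ λₙ > 0 be real numbers. The function f(t) := (t − λₙ)²/(λₙ·t) + λ₁/t attains a unique minimum on the interval [λₙ, λ_{n−1}] at the point t* = min{√(λₙ² + λₙλ₁), λ_{n−1}}. -/
/-!
Expanding the square turns the loss into `(t + c / t) / λₙ - 2` with `c = λₙ² + λₙ λ₁`. On the
positive axis `t + c / t` strictly decreases up to `√c` and strictly increases afterwards, so on
`(0, λₙ₋₁]` it is smallest at `√c`, or at the right endpoint if `√c` lies beyond it.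
-/

open Set

section UnimodalMinimum

variable {α β : Type*} [LinearOrder α] [Preorder β] {f : α → β} {a b s t : α}

theorem apply_min_lt_of_strictAntiOn_of_strictMonoOn (hanti : StrictAntiOn f (Ioc a s))
    (hmono : StrictMonoOn f (Ici s)) (ht : t ∈ Ioc a b) (hne : t ≠ min s b) :
    f (min s b) < f t := by
  rcases hne.lt_or_gt with hlt | hgt
  · have hts : t ≤ s := hlt.le.trans (min_le_left s b)
    exact hanti ⟨ht.1, hts⟩ ⟨ht.1.trans hlt, min_le_left s b⟩ hlt
  · have hst : s < t := (min_lt_iff.mp hgt).resolve_right ht.2.not_gt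
    rw [min_eq_left (hst.le.trans ht.2)]
    exact hmono self_mem_Ici hst.le hst

end UnimodalMinimum

section AddSqDiv

variable {K : Type*} [Field K]

theorem add_div_sub_add_div {c x y : K} (hx : x ≠ 0) (hy : y ≠ 0) :
    (y + c / y) - (x + c / x) = (y - x) * (x * y - c) / (x * y) := by
  field_simp
  ring

variable [LinearOrder K] [IsStrictOrderedRing K]

theorem strictAntiOn_add_sq_div (s : K) : StrictAntiOn (fun t ↦ t + s ^ 2 / t) (Ioc 0 s) := by
  rintro x ⟨hx, -⟩ y ⟨hy, hys⟩ hxy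
  have hprod : x * y < s ^ 2 := calc
    x * y < y * y := mul_lt_mul_of_pos_right hxy hy
    _ ≤ s ^ 2 := by rw [← sq]; gcongr
  rw [← sub_neg, add_div_sub_add_div hx.ne' hy.ne']
  exact div_neg_of_neg_of_pos (mul_neg_of_pos_of_neg (sub_pos.mpr hxy) (sub_neg.mpr hprod))
    (mul_pos hx hy)

theorem strictMonoOn_add_sq_div {s : K} (hs : 0 < s) :
    StrictMonoOn (fun t ↦ t + s ^ 2 / t) (Ici s) := by
  intro x hsx y hsy hxy
  have hx : 0 < x := hs.trans_le hsx
  have hy : 0 < y := hs.trans_le hsy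
  have hprod : s ^ 2 < x * y := calc
    s ^ 2 ≤ x * x := by rw [← sq]; exact pow_le_pow_left₀ hs.le hsx 2
    _ < x * y := mul_lt_mul_of_pos_left hxy hx
  rw [← sub_pos, add_div_sub_add_div hx.ne' hy.ne']
  exact div_pos (mul_pos (sub_pos.mpr hxy) (sub_pos.mpr hprod)) (mul_pos hx hy)

end AddSqDiv

theorem add_div_apply_min_sqrt_lt {b c t : ℝ} (hc : 0 < c) (ht : t ∈ Ioc 0 b)
    (hne : t ≠ min √c b) : min √c b + c / min √c b < t + c / t := by
  have h := apply_min_lt_of_strictAntiOn_of_strictMonoOn (strictAntiOn_add_sq_div √c)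
    (strictMonoOn_add_sq_div (Real.sqrt_pos.mpr hc)) ht hne
  simpa only [Real.sq_sqrt hc.le] using h

/-- The simplified a priori loss of the high-order regularization method (`s = n - 1`, `k = 1`) as
a function of the squared regularization parameter `t = μ²`: the norm of the approximation residual
of the matrix inverse plus the condition number of the regularized matrix. Here `lam1` and `lamn`
are the extreme eigenvalues of `AᵀA`. -/
noncomputable def aprioriLoss (lam1 lamn t : ℝ) : ℝ :=
  (t - lamn) ^ 2 / (lamn * t) + lam1 / t

theorem aprioriLoss_eq {lam1 lamn t : ℝ} (hn : lamn ≠ 0) (ht : t ≠ 0) :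
    aprioriLoss lam1 lamn t = (t + (lamn ^ 2 + lamn * lam1) / t) / lamn - 2 := by
  unfold aprioriLoss
  field_simp
  ring

theorem aprioriLoss_min_sqrt_lt {lam1 lamn b t : ℝ} (hn : 0 < lamn)
    (hc : 0 < lamn ^ 2 + lamn * lam1) (ht : t ∈ Ioc 0 b)
    (hne : t ≠ min √(lamn ^ 2 + lamn * lam1) b) :
    aprioriLoss lam1 lamn (min √(lamn ^ 2 + lamn * lam1) b) < aprioriLoss lam1 lamn t := by
  have hmin : 0 < min √(lamn ^ 2 + lamn * lam1) b :=
    lt_min (Real.sqrt_pos.mpr hc) (ht.1.trans_le ht.2)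
  rw [aprioriLoss_eq hn.ne' hmin.ne', aprioriLoss_eq hn.ne' ht.1.ne']
  exact sub_lt_sub_right (div_lt_div_of_pos_right (add_div_apply_min_sqrt_lt hc ht hne) hn) 2

theorem stmt_11_general {lam1 lam2 lamn : ℝ} (h1 : 0 ≤ lam1) (h2 : lamn ≤ lam2)
    (h3 : 0 < lamn) :
    min √(lamn ^ 2 + lamn * lam1) lam2 ∈ Icc lamn lam2 ∧
    ∀ t ∈ Ioc 0 lam2, t ≠ min √(lamn ^ 2 + lamn * lam1) lam2 →
      aprioriLoss lam1 lamn (min √(lamn ^ 2 + lamn * lam1) lam2) < aprioriLoss lam1 lamn t := by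
  have hsq : lamn ^ 2 ≤ lamn ^ 2 + lamn * lam1 := le_add_of_nonneg_right (mul_nonneg h3.le h1)
  have hc : 0 < lamn ^ 2 + lamn * lam1 := (pow_pos h3 2).trans_le hsq
  exact ⟨⟨le_min (Real.le_sqrt_of_sq_le hsq) h2, min_le_right _ _⟩,
    fun t ht hne ↦ aprioriLoss_min_sqrt_lt h3 hc ht hne⟩

/-- For `λ₁ ≥ λ_{n−1} ≥ λₙ > 0`, the loss `f(t) = (t − λₙ)²/(λₙ t) + λ₁/t` attains a
unique minimum on `[λₙ, λ_{n−1}]` at `t* = min{√(λₙ² + λₙλ₁), λ_{n−1}}`. -/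
theorem stmt_11 (lam1 lam2 lamn : ℝ) (h1 : lam2 ≤ lam1) (h2 : lamn ≤ lam2) (h3 : 0 < lamn) :
    min (Real.sqrt (lamn ^ 2 + lamn * lam1)) lam2 ∈ Set.Icc lamn lam2 ∧
    ∀ t ∈ Set.Icc lamn lam2, t ≠ min (Real.sqrt (lamn ^ 2 + lamn * lam1)) lam2 →
      (min (Real.sqrt (lamn ^ 2 + lamn * lam1)) lam2 - lamn) ^ 2 /
          (lamn * min (Real.sqrt (lamn ^ 2 + lamn * lam1)) lam2) +
        lam1 / min (Real.sqrt (lamn ^ 2 + lamn * lam1)) lam2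
      < (t - lamn) ^ 2 / (lamn * t) + lam1 / t := by
  have h := stmt_11_general ((h3.le.trans h2).trans h1) h2 h3
  exact ⟨h.1, fun t ht hne ↦ h.2 t ⟨h3.trans_le ht.1, ht.2⟩ hne⟩
end

section
/- Let A be a real m×n matrix and R a real n×n matrix such that AᵀA, AᵀA + R, and I + R(AᵀA)⁻¹ are all invertible. Then (AᵀA)⁻¹ − (AᵀA + R)⁻¹ − (AᵀA + R)⁻¹R(AᵀA + R)⁻¹ = (AᵀA + R)⁻¹·((I + R(AᵀA)⁻¹)⁻¹ − I + R(AᵀA)⁻¹). Consequently, for any b ∈ ℝᵐ, the difference between the least squares solution x̂_ls = (AᵀA)⁻¹Aᵀb and the first-order regularization solution x̂¹ = (AᵀA + R)⁻¹Aᵀb + (AᵀA + R)⁻¹R(AᵀA + R)⁻¹Aᵀb equals (AᵀA + R)⁻¹((I + R(AᵀA)⁻¹)⁻¹ − I + R(AᵀA)⁻¹)Aᵀb. -/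
open Matrix

/-!
Write `N = AᵀA` and `M = N + R`. Since `I + RN⁻¹ = MN⁻¹`, its inverse is `NM⁻¹ = I - RM⁻¹`, so the
right-hand side collapses to `M⁻¹R(N⁻¹ - M⁻¹)`. So does the left-hand side, by the resolvent
identity `N⁻¹ - M⁻¹ = M⁻¹RN⁻¹`.
-/

section Ring

open scoped Ring

variable {α : Type*} [Ring α] {a r : α}

theorem ringInverse_one_add_mul_ringInverse (ha : IsUnit a) (har : IsUnit (a + r)) :
    (1 + r * a⁻¹ʳ)⁻¹ʳ = 1 - r * (a + r)⁻¹ʳ := by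
  have factor : 1 + r * a⁻¹ʳ = (a + r) * a⁻¹ʳ := by
    rw [add_mul, Ring.mul_inverse_cancel a ha]
  have sum_eq_one : a * (a + r)⁻¹ʳ + r * (a + r)⁻¹ʳ = 1 := by
    rw [← add_mul, Ring.mul_inverse_cancel _ har]
  rw [factor, Ring.inverse_mul (.inl har), Ring.inverse_inverse ha, eq_sub_of_add_eq sum_eq_one]

theorem ringInverse_sub_ringInverse_add (h : IsUnit a ↔ IsUnit (a + r)) :
    a⁻¹ʳ - (a + r)⁻¹ʳ = (a + r)⁻¹ʳ * r * a⁻¹ʳ := by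
  rw [← neg_sub, Ring.inverse_sub_inverse h.symm, sub_add_cancel_left, mul_neg, neg_mul, neg_neg]

theorem ringInverse_sub_first_order_regularization (ha : IsUnit a) (har : IsUnit (a + r)) :
    a⁻¹ʳ - (a + r)⁻¹ʳ - (a + r)⁻¹ʳ * r * (a + r)⁻¹ʳ =
      (a + r)⁻¹ʳ * ((1 + r * a⁻¹ʳ)⁻¹ʳ - 1 + r * a⁻¹ʳ) := by
  rw [ringInverse_sub_ringInverse_add (iff_of_true ha har),
    ringInverse_one_add_mul_ringInverse ha har]
  noncomm_ring

end Ring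

theorem stmt_14_general {n K : Type*} [Fintype n] [DecidableEq n] [CommRing K]
    {N R : Matrix n n K} (hN : IsUnit N) (hNR : IsUnit (N + R)) :
    N⁻¹ - (N + R)⁻¹ - (N + R)⁻¹ * R * (N + R)⁻¹
      = (N + R)⁻¹ * ((1 + R * N⁻¹)⁻¹ - 1 + R * N⁻¹) ∧
    ∀ c : n → K,
      N⁻¹ *ᵥ c - ((N + R)⁻¹ *ᵥ c + ((N + R)⁻¹ * R * (N + R)⁻¹) *ᵥ c)
        = ((N + R)⁻¹ * ((1 + R * N⁻¹)⁻¹ - 1 + R * N⁻¹)) *ᵥ c := by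
  have inverse_identity : N⁻¹ - (N + R)⁻¹ - (N + R)⁻¹ * R * (N + R)⁻¹
      = (N + R)⁻¹ * ((1 + R * N⁻¹)⁻¹ - 1 + R * N⁻¹) := by
    simpa only [nonsing_inv_eq_ringInverse] using
      ringInverse_sub_first_order_regularization hN hNR
  refine ⟨inverse_identity, fun c => ?_⟩
  rw [← inverse_identity, sub_mulVec, sub_mulVec, sub_sub]

/-- If `AᵀA`, `AᵀA + R` and `I + R(AᵀA)⁻¹` are invertible, then
`(AᵀA)⁻¹ − (AᵀA + R)⁻¹ − (AᵀA + R)⁻¹R(AᵀA + R)⁻¹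
  = (AᵀA + R)⁻¹((I + R(AᵀA)⁻¹)⁻¹ − I + R(AᵀA)⁻¹)`, and consequently for every `b`
the difference between the LS solution and the first-order regularization solution
equals `(AᵀA + R)⁻¹((I + R(AᵀA)⁻¹)⁻¹ − I + R(AᵀA)⁻¹)Aᵀb`. -/
theorem stmt_14 {m n : ℕ} (A : Matrix (Fin m) (Fin n) ℝ) (R : Matrix (Fin n) (Fin n) ℝ)
    (h1 : IsUnit (Aᵀ * A)) (h2 : IsUnit (Aᵀ * A + R)) (h3 : IsUnit (1 + R * (Aᵀ * A)⁻¹)) :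
    (Aᵀ * A)⁻¹ - (Aᵀ * A + R)⁻¹ - (Aᵀ * A + R)⁻¹ * R * (Aᵀ * A + R)⁻¹
      = (Aᵀ * A + R)⁻¹ * ((1 + R * (Aᵀ * A)⁻¹)⁻¹ - 1 + R * (Aᵀ * A)⁻¹) ∧
    ∀ b : Fin m → ℝ,
      (Aᵀ * A)⁻¹ *ᵥ (Aᵀ *ᵥ b) -
          ((Aᵀ * A + R)⁻¹ *ᵥ (Aᵀ *ᵥ b) +
            ((Aᵀ * A + R)⁻¹ * R * (Aᵀ * A + R)⁻¹) *ᵥ (Aᵀ *ᵥ b))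
        = ((Aᵀ * A + R)⁻¹ * ((1 + R * (Aᵀ * A)⁻¹)⁻¹ - 1 + R * (Aᵀ * A)⁻¹)) *ᵥ (Aᵀ *ᵥ b) := by
  have general := stmt_14_general h1 h2
  exact ⟨general.1, fun b => general.2 (Aᵀ *ᵥ b)⟩
end

section
/- Let A be a real m×n matrix and R a real n×n matrix such that AᵀA and AᵀA + R are invertible and the spectral radius of M := R(AᵀA + R)⁻¹ is strictly less than 1. Then for every k ∈ ℕ and every b ∈ ℝᵐ, the difference between the least squares solution x̂_ls = (AᵀA)⁻¹Aᵀb and the kth-order regularization solution x̂ᵏ = (AᵀA + R)⁻¹·∑_{i=0}^k Mⁱ·Aᵀb equals (AᵀA + R)⁻¹·(∑_{i=k+1}^∞ Mⁱ)·Aᵀb; in particular ‖x̂_ls − x̂ᵏ‖ ≤ ‖(AᵀA + R)⁻¹·(∑_{i=k+1}^∞ Mⁱ)·Aᵀb‖. -/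
open Matrix

/-! By Gelfand's formula the Neumann series `∑ Mⁱ` converges when the spectral radius of `M` is
less than one. For `M = R (S + R)⁻¹` one has `1 - M = S (S + R)⁻¹`, so the Neumann series expands
`S⁻¹` as `(S + R)⁻¹ ∑ Mⁱ`; the `k`-th order regularization solution truncates this expansion at
`S = AᵀA`, and the bias is the remaining tail. -/

section BanachAlgebra

open Filter
open scoped NNReal

variable {𝔸 : Type*} [NormedRing 𝔸] [NormedAlgebra ℂ 𝔸] [CompleteSpace 𝔸] {a : 𝔸}

lemma eventually_nnnorm_pow_lt_pow_of_spectralRadius_lt {r : ℝ≥0}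
    (h : spectralRadius ℂ a < r) : ∀ᶠ n : ℕ in atTop, ‖a ^ n‖₊ < r ^ n := by
  filter_upwards [(spectrum.gelfand_formula a).eventually_lt_const h, eventually_gt_atTop 0]
    with n hroot hn
  rw [one_div, ENNReal.rpow_inv_lt_iff (by positivity), ENNReal.rpow_natCast] at hroot
  exact_mod_cast hroot

lemma summable_norm_pow_of_spectralRadius_lt_one (h : spectralRadius ℂ a < 1) :
    Summable fun n : ℕ => ‖a ^ n‖ := by
  obtain ⟨r, har, hr⟩ := ENNReal.lt_iff_exists_nnreal_btwn.1 h
  have hgeom : Summable fun n : ℕ => (r : ℝ) ^ n :=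
    summable_geometric_of_lt_one r.coe_nonneg (by exact_mod_cast hr)
  refine hgeom.of_norm_bounded_eventually_nat ?_
  filter_upwards [eventually_nnnorm_pow_lt_pow_of_spectralRadius_lt har] with n hn
  rw [norm_norm]
  exact_mod_cast hn.le

end BanachAlgebra

section SquareMatrix

variable {ι : Type*} [Fintype ι] [DecidableEq ι]

-- The topology of the L2 operator norm is definitionally the entrywise one.
open scoped Matrix.Norms.L2Operator in
lemma summable_matrix_pow_of_spectralRadius_lt_one {X : Matrix ι ι ℂ}
    (h : spectralRadius ℂ X < 1) : Summable fun n : ℕ => X ^ n :=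
  (summable_norm_pow_of_spectralRadius_lt_one h).of_norm

lemma summable_matrix_pow_of_spectralRadius_map_lt_one {𝕜 : Type*} [NormedField 𝕜]
    [CompleteSpace 𝕜] [NormedAlgebra 𝕜 ℂ] {M : Matrix ι ι 𝕜}
    (h : spectralRadius ℂ (M.map (algebraMap 𝕜 ℂ)) < 1) : Summable fun n : ℕ => M ^ n := by
  refine Pi.summable.2 fun i => Pi.summable.2 fun j => Summable.of_norm ?_
  have hentry : Summable fun n : ℕ => (M.map (algebraMap 𝕜 ℂ) ^ n) i j :=
    Pi.summable.1 (Pi.summable.1 (summable_matrix_pow_of_spectralRadius_lt_one h) i) j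
  simpa only [← Matrix.map_pow, Matrix.map_apply, norm_algebraMap'] using hentry.norm

lemma one_sub_mul_add_inv {α : Type*} [CommRing α] {S R : Matrix ι ι α} (h : IsUnit (S + R)) :
    1 - R * (S + R)⁻¹ = S * (S + R)⁻¹ := by
  have hdet : IsUnit (S + R).det := (isUnit_iff_isUnit_det _).1 h
  rw [sub_eq_iff_eq_add, ← add_mul, mul_nonsing_inv _ hdet]

section TopologicalRing

variable {α : Type*} [CommRing α] [TopologicalSpace α] [IsTopologicalRing α] [T2Space α]
  {S R : Matrix ι ι α}

lemma inv_eq_add_inv_mul_tsum_pow (h : IsUnit (S + R))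
    (hs : Summable fun i : ℕ => (R * (S + R)⁻¹) ^ i) :
    S⁻¹ = (S + R)⁻¹ * ∑' i : ℕ, (R * (S + R)⁻¹) ^ i := by
  refine inv_eq_right_inv ?_
  rw [← mul_assoc, ← one_sub_mul_add_inv h, hs.one_sub_mul_tsum_pow]

lemma inv_sub_add_inv_mul_sum_pow (h : IsUnit (S + R))
    (hs : Summable fun i : ℕ => (R * (S + R)⁻¹) ^ i) (k : ℕ) :
    S⁻¹ - (S + R)⁻¹ * ∑ i ∈ Finset.range k, (R * (S + R)⁻¹) ^ i =
      (S + R)⁻¹ * ∑' i : ℕ, (R * (S + R)⁻¹) ^ (i + k) := by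
  rw [inv_eq_add_inv_mul_tsum_pow h hs, ← mul_sub, ← hs.sum_add_tsum_nat_add k,
    add_sub_cancel_left]

end TopologicalRing

theorem stmt_15_general {𝕜 : Type*} [NormedField 𝕜] [CompleteSpace 𝕜] [NormedAlgebra 𝕜 ℂ]
    {S R M : Matrix ι ι 𝕜} (h : IsUnit (S + R)) (hM : M = R * (S + R)⁻¹)
    (hρ : spectralRadius ℂ (M.map (algebraMap 𝕜 ℂ)) < 1) (k : ℕ) (v : ι → 𝕜) :
    Summable (fun i : ℕ => M ^ (i + k)) ∧
    S⁻¹ *ᵥ v - ((S + R)⁻¹ * ∑ i ∈ Finset.range k, M ^ i) *ᵥ v =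
      ((S + R)⁻¹ * ∑' i : ℕ, M ^ (i + k)) *ᵥ v := by
  have hs : Summable fun i : ℕ => M ^ i := summable_matrix_pow_of_spectralRadius_map_lt_one hρ
  refine ⟨(summable_nat_add_iff k).2 hs, ?_⟩
  subst hM
  rw [← sub_mulVec, inv_sub_add_inv_mul_sum_pow h hs]

end SquareMatrix

/-- With `AᵀA` and `AᵀA + R` invertible and the spectral radius of `M := R(AᵀA + R)⁻¹`
less than 1, the bias between the LS solution `x̂_ls = (AᵀA)⁻¹Aᵀb` and the `k`-th order
regularization solution `x̂ᵏ = (AᵀA + R)⁻¹ ∑_{i=0}^k Mⁱ Aᵀb` equals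
`(AᵀA + R)⁻¹ (∑_{i=k+1}^∞ Mⁱ) Aᵀb`; in particular the Euclidean norm of the bias is
bounded by the norm of that vector. -/
theorem stmt_15 {m n : ℕ} (A : Matrix (Fin m) (Fin n) ℝ) (R : Matrix (Fin n) (Fin n) ℝ)
    (h1 : IsUnit (Aᵀ * A)) (h2 : IsUnit (Aᵀ * A + R))
    (M : Matrix (Fin n) (Fin n) ℝ) (hM : M = R * (Aᵀ * A + R)⁻¹)
    (hρ : spectralRadius ℂ (M.map Complex.ofReal) < 1) (k : ℕ) (b : Fin m → ℝ) :
    Summable (fun i : ℕ => M ^ (i + (k + 1))) ∧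
    (Aᵀ * A)⁻¹ *ᵥ (Aᵀ *ᵥ b) -
        ((Aᵀ * A + R)⁻¹ * ∑ i ∈ Finset.range (k + 1), M ^ i) *ᵥ (Aᵀ *ᵥ b)
      = ((Aᵀ * A + R)⁻¹ * ∑' i : ℕ, M ^ (i + (k + 1))) *ᵥ (Aᵀ *ᵥ b) ∧
    ‖(WithLp.equiv 2 (Fin n → ℝ)).symm ((Aᵀ * A)⁻¹ *ᵥ (Aᵀ *ᵥ b) -
        ((Aᵀ * A + R)⁻¹ * ∑ i ∈ Finset.range (k + 1), M ^ i) *ᵥ (Aᵀ *ᵥ b))‖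
      ≤ ‖(WithLp.equiv 2 (Fin n → ℝ)).symm
          (((Aᵀ * A + R)⁻¹ * ∑' i : ℕ, M ^ (i + (k + 1))) *ᵥ (Aᵀ *ᵥ b))‖ := by
  obtain ⟨hsummable, hbias⟩ := stmt_15_general h2 hM hρ (k + 1) (Aᵀ *ᵥ b)
  exact ⟨hsummable, hbias, by rw [hbias]⟩
end

section
/- Let λ₁ ≥ λₙ > 0 be real numbers and let k ∈ ℕ. The function f(t) := (t/λₙ)·(1 − λₙ/t)^{k+1} + λ₁/t has strictly positive second derivative at every t > λₙ; in particular f is strictly convex on (λₙ, ∞). -/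
/-!
The loss is `f t = t * φ (λₙ / t)` for the polynomial
`φ x = (1 - x) ^ (k + 1) / λₙ + λ₁ / λₙ ^ 2 * x ^ 2`. In the second derivative of `t * φ (c / t)`
the terms containing `φ'` cancel and `c ^ 2 / t ^ 3 * φ'' (c / t)` is left, so the claim reduces to
`φ'' > 0` on `(-∞, 1)`.
-/

open Set Filter Topology

section Perspective

variable {𝕜 : Type*}

/-- The perspective `(x, t) ↦ t * φ (x / t)` of a function `φ`, as a function of the scale `t` with
the argument `x = c` held fixed. Its value at `t = 0` is `0`. -/
def perspective [Field 𝕜] (φ : 𝕜 → 𝕜) (c t : 𝕜) : 𝕜 :=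
  t * φ (c / t)

variable [NontriviallyNormedField 𝕜] {φ : 𝕜 → 𝕜} {c t : 𝕜}

theorem hasDerivAt_const_div (c : 𝕜) (ht : t ≠ 0) :
    HasDerivAt (fun s ↦ c / s) (-(c / t ^ 2)) t := by
  simpa [div_eq_mul_inv] using (hasDerivAt_inv ht).const_mul c

theorem hasDerivAt_perspective {φ' : 𝕜} (ht : t ≠ 0) (hφ : HasDerivAt φ φ' (c / t)) :
    HasDerivAt (perspective φ c) (φ (c / t) - c / t * φ') t := by
  refine ((hasDerivAt_id t).fun_mul (hφ.comp t (hasDerivAt_const_div c ht))).congr_deriv ?_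
  simp only [Function.comp_apply, id_eq]
  field_simp
  ring

theorem deriv_perspective_eventuallyEq (ht : t ≠ 0)
    (hφ : ∀ᶠ x in 𝓝 (c / t), DifferentiableAt 𝕜 φ x) :
    deriv (perspective φ c) =ᶠ[𝓝 t] fun s ↦ φ (c / s) - c / s * deriv φ (c / s) := by
  have hdiv : Tendsto (fun s ↦ c / s) (𝓝 t) (𝓝 (c / t)) :=
    (hasDerivAt_const_div c ht).continuousAt
  filter_upwards [eventually_ne_nhds ht, hdiv.eventually hφ] with s hs hφs
  exact (hasDerivAt_perspective hs hφs.hasDerivAt).deriv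

theorem iteratedDeriv_two_perspective (ht : t ≠ 0) (hφ : ContDiffAt 𝕜 2 φ (c / t)) :
    iteratedDeriv 2 (perspective φ c) t = c ^ 2 / t ^ 3 * iteratedDeriv 2 φ (c / t) := by
  have hdiff : ∀ᶠ x in 𝓝 (c / t), DifferentiableAt 𝕜 φ x :=
    (hφ.eventually (by simp)).mono fun x hx ↦ hx.differentiableAt two_ne_zero
  have hdiff' : DifferentiableAt 𝕜 (deriv φ) (c / t) :=
    (hφ.derivWithin (m := 1) (by norm_num)).differentiableAt one_ne_zero
  have hdiv := hasDerivAt_const_div c ht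
  have hderiv := (hdiff.self_of_nhds.hasDerivAt.comp t hdiv).sub
    (hdiv.fun_mul (hdiff'.hasDerivAt.comp t hdiv))
  simp only [iteratedDeriv_succ, iteratedDeriv_zero]
  rw [(deriv_perspective_eventuallyEq ht hdiff).deriv_eq]
  refine (hderiv.congr_deriv ?_).deriv
  simp only [Function.comp_apply]
  field_simp
  ring

end Perspective

theorem iteratedDeriv_two_perspective_pos {φ : ℝ → ℝ} {c t : ℝ} (hc : c ≠ 0) (ht : 0 < t)
    (hφ : ContDiffAt ℝ 2 φ (c / t)) (hpos : 0 < iteratedDeriv 2 φ (c / t)) :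
    0 < iteratedDeriv 2 (perspective φ c) t := by
  rw [iteratedDeriv_two_perspective ht.ne' hφ]
  positivity

theorem strictConvexOn_perspective {φ : ℝ → ℝ} {c : ℝ} {D : Set ℝ} (hc : c ≠ 0)
    (hD : Convex ℝ D) (hD_pos : D ⊆ Ioi 0) (hφ : ∀ t ∈ D, ContDiffAt ℝ 2 φ (c / t))
    (hpos : ∀ t ∈ D, 0 < iteratedDeriv 2 φ (c / t)) :
    StrictConvexOn ℝ D (perspective φ c) := by
  refine strictConvexOn_of_deriv2_pos' hD (fun t ht ↦ ?_) fun t ht ↦ ?_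
  · have hφt := ((hφ t ht).differentiableAt two_ne_zero).hasDerivAt
    exact (hasDerivAt_perspective (hD_pos ht).ne' hφt).continuousAt.continuousWithinAt
  · rw [← iteratedDeriv_eq_iterate]
    exact iteratedDeriv_two_perspective_pos hc (hD_pos ht) (hφ t ht) (hpos t ht)

section LossProfile

variable {𝕜 : Type*}

/-- The polynomial whose perspective with argument `l` is the loss function of order `k` for the
extreme eigenvalues `a = λ₁` and `l = λₙ`. -/
def lossProfile [Field 𝕜] (a l : 𝕜) (k : ℕ) (x : 𝕜) : 𝕜 :=
  (1 - x) ^ (k + 1) / l + a / l ^ 2 * x ^ 2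

theorem perspective_lossProfile [Field 𝕜] {l : 𝕜} (hl : l ≠ 0) (a : 𝕜) (k : ℕ) :
    perspective (lossProfile a l k) l = fun t ↦ t / l * (1 - l / t) ^ (k + 1) + a / t := by
  funext t
  rcases eq_or_ne t 0 with rfl | ht
  · simp [perspective]
  · simp only [perspective, lossProfile]
    field_simp

variable [NontriviallyNormedField 𝕜]

theorem contDiff_lossProfile (a l : 𝕜) (k : ℕ) {n : WithTop ℕ∞} :
    ContDiff 𝕜 n (lossProfile a l k) := by
  unfold lossProfile
  fun_prop

theorem iteratedDeriv_two_lossProfile (a l : 𝕜) (k : ℕ) (x : 𝕜) :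
    iteratedDeriv 2 (lossProfile a l k) x =
      (k + 1) * k * (1 - x) ^ (k - 1) / l + 2 * a / l ^ 2 := by
  have hpow : iteratedDeriv 2 (fun y : 𝕜 ↦ (1 - y) ^ (k + 1)) x =
      (k + 1) * k * (1 - x) ^ (k - 1) := by
    rw [iteratedDeriv_comp_const_sub 2 (· ^ (k + 1))]
    simp [Nat.descFactorial, mul_comm]
  have hsq : iteratedDeriv 2 (fun y : 𝕜 ↦ y ^ 2) x = 2 := by
    simp [Nat.descFactorial]
  unfold lossProfile
  rw [iteratedDeriv_fun_add (by fun_prop) (by fun_prop), iteratedDeriv_div_const,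
    iteratedDeriv_const_mul_field, hpow, hsq]
  ring

end LossProfile

theorem iteratedDeriv_two_lossProfile_pos {a l x : ℝ} (ha : 0 < a) (hl : 0 < l) (hx : x < 1)
    (k : ℕ) : 0 < iteratedDeriv 2 (lossProfile a l k) x := by
  have : 0 < 1 - x := sub_pos.2 hx
  rw [iteratedDeriv_two_lossProfile]
  positivity

theorem stmt_18_general (lam1 lamn : ℝ) (hlam1 : 0 < lam1) (hlamn : 0 < lamn) (k : ℕ) :
    (∀ t : ℝ, lamn < t →
      0 < iteratedDeriv 2
        (fun t : ℝ => (t / lamn) * (1 - lamn / t) ^ (k + 1) + lam1 / t) t) ∧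
    StrictConvexOn ℝ (Set.Ioi lamn)
      (fun t : ℝ => (t / lamn) * (1 - lamn / t) ^ (k + 1) + lam1 / t) := by
  rw [← perspective_lossProfile hlamn.ne']
  have hsmooth (x : ℝ) : ContDiffAt ℝ 2 (lossProfile lam1 lamn k) x :=
    (contDiff_lossProfile lam1 lamn k).contDiffAt
  have hpos (t : ℝ) (ht : lamn < t) :
      0 < iteratedDeriv 2 (lossProfile lam1 lamn k) (lamn / t) :=
    iteratedDeriv_two_lossProfile_pos hlam1 hlamn ((div_lt_one (hlamn.trans ht)).2 ht) k
  exact ⟨fun t ht ↦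
      iteratedDeriv_two_perspective_pos hlamn.ne' (hlamn.trans ht) (hsmooth _) (hpos t ht),
    strictConvexOn_perspective hlamn.ne' (convex_Ioi lamn) (Ioi_subset_Ioi hlamn.le)
      (fun _ _ ↦ hsmooth _) hpos⟩

/-- For `λ₁ ≥ λₙ > 0` and `k ∈ ℕ`, the loss
`f(t) = (t/λₙ)(1 − λₙ/t)^{k+1} + λ₁/t` has strictly positive second derivative at every
`t > λₙ`; in particular `f` is strictly convex on `(λₙ, ∞)`. -/
theorem stmt_18 (lam1 lamn : ℝ) (h1 : lamn ≤ lam1) (h2 : 0 < lamn) (k : ℕ) :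
    (∀ t : ℝ, lamn < t →
      0 < iteratedDeriv 2
        (fun t : ℝ => (t / lamn) * (1 - lamn / t) ^ (k + 1) + lam1 / t) t) ∧
    StrictConvexOn ℝ (Set.Ioi lamn)
      (fun t : ℝ => (t / lamn) * (1 - lamn / t) ^ (k + 1) + lam1 / t) :=
  stmt_18_general lam1 lamn (h2.trans_le h1) h2 k
end
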